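/- Let B be a one-dimensional complete local Gorenstein ring with fraction-field-like localization, and let 𝔠 ⊆ B be the conductor of a finite birational extension B ⊆ A with A maximal Cohen–Macaulay. Then the natural map A → Hom_B(𝔠, B), a ↦ (x ↦ ax), is an isomorphism of B-modules. -/

import Mathlib

noncomputable section

open CategoryTheory

/-- A Noetherian local ring `B` is Gorenstein if it has finite injective dimension over
itself; by Bass' criterion this holds iff `Ext^i(κ, B)` vanishes for all large `i`,
where `κ` is the residue field. -/
def IsGorensteinLocalRing (B : Type*) [CommRing B] [IsLocalRing B] : Prop :=
  IsNoetherianRing B ∧ ∃ n : ℕ, ∀ i : ℕ, n < i →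
    Subsingleton (((Ext B (ModuleCat B) i).obj
      (Opposite.op (ModuleCat.of B (IsLocalRing.ResidueField B)))).obj (ModuleCat.of B B))

/-- The conductor ideal `𝔠 = Ann_B(A/B)` of a ring extension `B ⊆ A`. -/
def conductorIdeal (B A : Type*) [CommRing B] [CommRing A] [Algebra B A] : Ideal B :=
  Module.annihilator B (A ⧸ LinearMap.range (Algebra.linearMap B A))

/-!
Fix a regular `t ∈ 𝔠` and put `I = tA ∩ B`, so that `(tB : I) ⊆ 𝔠`. Any `ψ ∈ Hom_B(𝔠, B)` satisfies
`c ψ(t) = t ψ(c)`, hence `ψ(t) ∈ (tB : (tB : I))`. In a one-dimensional Gorenstein ring the double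
colon is `I` again, so `ψ(t) = t a` with `a ∈ A`, and `ψ` is multiplication by `a`.

The double colon property holds because `B/tB` cogenerates the finite length modules killed by `t`:
`Hom(N, B/tB) ≅ Ext¹(N, B)` for such `N`, and `Ext²(-, B)` vanishes on modules of finite length.
By dévissage this vanishing only concerns the residue field `κ`, where it descends from large
degrees: `κ` embeds in `B/tB`, which has projective dimension at most one, so `Extⁱ⁺¹(κ, B) = 0`
implies `Extⁱ(κ, B) = 0` for `i ≥ 2`.
-/

universe u

section Ext

variable {R : Type u} [CommRing R]

theorem subsingleton_abelianExt_of_subsingleton_ext {X Y : ModuleCat.{u} R} {i : ℕ}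
    (h : Subsingleton (((Ext R (ModuleCat R) (i + 1)).obj (.op X)).obj Y)) :
    Subsingleton (Abelian.Ext X Y (i + 1)) := by
  let P := ProjectiveResolution.of X
  have exact_dual : ((P.complex.linearYonedaObj R Y).sc' i (i + 1) (i + 2)).Exact := by
    rw [← HomologicalComplex.exactAt_iff' _ _ _ _ (by simp) (by simp),
      HomologicalComplex.exactAt_iff_isZero_homology]
    exact (ModuleCat.isZero_of_subsingleton _).of_iso (P.isoExt (i + 1) Y).symm
  refine subsingleton_of_forall_eq 0 fun e => ?_
  obtain ⟨f, f_cocycle, rfl⟩ := P.extMk_surjective e (i + 2) rfl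
  exact (P.extMk_eq_zero_iff f _ rfl f_cocycle i rfl).mpr
    ((ShortComplex.moduleCat_exact_iff _).mp exact_dual f f_cocycle)

theorem subsingleton_ext_X₁ {S : ShortComplex (ModuleCat.{u} R)} (hS : S.ShortExact)
    {Y : ModuleCat.{u} R} {i : ℕ} (h₂ : Subsingleton (Abelian.Ext S.X₂ Y i))
    (h₃ : Subsingleton (Abelian.Ext S.X₃ Y (i + 1))) : Subsingleton (Abelian.Ext S.X₁ Y i) := by
  refine subsingleton_of_forall_eq 0 fun e => ?_
  obtain ⟨e', rfl⟩ := Abelian.Ext.contravariant_sequence_exact₁ hS Y e (add_comm 1 i)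
    (Subsingleton.elim _ _)
  rw [Subsingleton.elim e' 0, Abelian.Ext.comp_zero]

theorem subsingleton_ext_X₂ {S : ShortComplex (ModuleCat.{u} R)} (hS : S.ShortExact)
    {Y : ModuleCat.{u} R} {i : ℕ} (h₁ : Subsingleton (Abelian.Ext S.X₁ Y i))
    (h₃ : Subsingleton (Abelian.Ext S.X₃ Y i)) : Subsingleton (Abelian.Ext S.X₂ Y i) := by
  refine subsingleton_of_forall_eq 0 fun e => ?_
  obtain ⟨e', rfl⟩ := Abelian.Ext.contravariant_sequence_exact₂ hS Y e (Subsingleton.elim _ _)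
  rw [Subsingleton.elim e' 0, Abelian.Ext.comp_zero]

theorem subsingleton_ext_of_iso {X X' Y : ModuleCat.{u} R} (e : X ≅ X') {i : ℕ}
    (h : Subsingleton (Abelian.Ext X Y i)) : Subsingleton (Abelian.Ext X' Y i) := by
  refine subsingleton_of_forall_eq 0 fun x => ?_
  rw [← Abelian.Ext.mk₀_id_comp x, ← e.inv_hom_id, ← Abelian.Ext.mk₀_comp_mk₀_assoc,
    Subsingleton.elim ((Abelian.Ext.mk₀ e.hom).comp x (zero_add i)) 0, Abelian.Ext.comp_zero]

theorem shortExact_of_exact {M N L : Type u} [AddCommGroup M] [Module R M] [AddCommGroup N]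
    [Module R N] [AddCommGroup L] [Module R L] {f : M →ₗ[R] N} {g : N →ₗ[R] L}
    (hf : Function.Injective f) (hfg : Function.Exact f g) (hg : Function.Surjective g) :
    (ModuleCat.shortComplexOfCompEqZero f g hfg.linearMap_comp_eq_zero).ShortExact :=
  ModuleCat.shortComplex_shortExact _ hfg hf hg

variable {t : R}

theorem subsingleton_ext_quotSMulTop_self (ht : IsSMulRegular R t) (Y : ModuleCat.{u} R) {i : ℕ}
    (hi : 2 ≤ i) : Subsingleton (Abelian.Ext (ModuleCat.of R (QuotSMulTop t R)) Y i) := by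
  have : Projective (ModuleCat.of R R) :=
    ModuleCat.projective_of_free (Module.Basis.singleton Unit R)
  have : HasProjectiveDimensionLT (ModuleCat.of R (QuotSMulTop t R)) 2 :=
    (ht.smulShortComplex_shortExact (M := ModuleCat.of R R)).hasProjectiveDimensionLT_X₃ 1
      (inferInstanceAs (HasProjectiveDimensionLT (ModuleCat.of R R) 1))
      (inferInstanceAs (HasProjectiveDimensionLT (ModuleCat.of R R) 2))
  exact HasProjectiveDimensionLT.subsingleton _ 2 i hi Y

theorem ext_comp_smul_eq_zero {X Y : ModuleCat.{u} R} (htX : t ∈ Module.annihilator R X) {i : ℕ}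
    (e : Abelian.Ext X Y i) :
    e.comp (Abelian.Ext.mk₀ (t • 𝟙 Y)) (add_zero i) = 0 :=
  DFunLike.congr_fun (congrArg AddCommGrpCat.Hom.hom
    (Abelian.Ext.postcomp_smul_id_eq_zero_of_mem_annihilator (M := Y) htX i)) e

theorem hom_eq_zero_of_isSMulRegular {X Y : ModuleCat.{u} R} (ht : IsSMulRegular Y t)
    (htX : t ∈ Module.annihilator R X) (f : X ⟶ Y) : f = 0 := by
  ext x
  refine ht.right_eq_zero_of_smul ?_
  rw [← map_smul, Module.mem_annihilator.mp htX, map_zero]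

theorem bijective_postcomp_extClass {X Y : ModuleCat.{u} R} (ht : IsSMulRegular Y t)
    (htX : t ∈ Module.annihilator R X) :
    Function.Bijective
      (ht.smulShortComplex_shortExact.extClass.postcomp X (zero_add 1)) := by
  refine ⟨(injective_iff_map_eq_zero _).mpr fun f hf => ?_, fun e =>
    Abelian.Ext.covariant_sequence_exact₁ X ht.smulShortComplex_shortExact e
      (ext_comp_smul_eq_zero htX e) (zero_add 1)⟩
  obtain ⟨g, rfl⟩ := Abelian.Ext.covariant_sequence_exact₃ X ht.smulShortComplex_shortExact f
    (zero_add 1) hf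
  obtain ⟨g, rfl⟩ := (Abelian.Ext.mk₀_bijective X Y).2 g
  rw [hom_eq_zero_of_isSMulRegular ht htX g, Abelian.Ext.mk₀_zero]
  exact Abelian.Ext.zero_comp ..

theorem exists_hom_factor_quotSMulTop {S : ShortComplex (ModuleCat.{u} R)} (hS : S.ShortExact)
    {Y : ModuleCat.{u} R} (ht : IsSMulRegular Y t) (htS : t ∈ Module.annihilator R S.X₂)
    (h₃ : Subsingleton (Abelian.Ext S.X₃ Y 2)) (f : S.X₁ ⟶ (Y.smulShortComplex t).X₃) :
    ∃ g : S.X₂ ⟶ (Y.smulShortComplex t).X₃, S.f ≫ g = f := by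
  have htS₁ : t ∈ Module.annihilator R S.X₁ :=
    LinearMap.annihilator_le_of_injective S.f.hom hS.moduleCat_injective_f htS
  obtain ⟨e, he⟩ := Abelian.Ext.contravariant_sequence_exact₁ hS Y
    ((Abelian.Ext.mk₀ f).comp ht.smulShortComplex_shortExact.extClass (zero_add 1)) rfl
    (Subsingleton.elim _ _)
  obtain ⟨g, rfl⟩ := (bijective_postcomp_extClass ht htS).2 e
  obtain ⟨g, rfl⟩ := (Abelian.Ext.mk₀_bijective _ _).2 g
  refine ⟨g, (Abelian.Ext.mk₀_bijective _ _).1 ((bijective_postcomp_extClass ht htS₁).1 ?_)⟩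
  rw [← Abelian.Ext.mk₀_comp_mk₀]
  exact (Abelian.Ext.comp_assoc _ _ _ _ (zero_add 1) rfl).trans he

end Ext

section ResidueField

open IsLocalRing

variable {R : Type u} [CommRing R] [IsLocalRing R]

theorem nonempty_linearEquiv_residueField (M : Type*) [AddCommGroup M] [Module R M]
    [IsSimpleModule R M] : Nonempty (M ≃ₗ[R] ResidueField R) := by
  obtain ⟨I, hI, ⟨e⟩⟩ := isSimpleModule_iff_quot_maximal.mp ‹IsSimpleModule R M›
  exact ⟨e.trans (Submodule.quotEquivOfEq I (maximalIdeal R) (eq_maximalIdeal hI))⟩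

theorem exists_injective_residueField (M : Type*) [AddCommGroup M] [Module R M] [Nontrivial M]
    [IsArtinian R M] : ∃ f : ResidueField R →ₗ[R] M, Function.Injective f := by
  obtain ⟨S, hS⟩ := IsAtomic.exists_atom (Submodule R M)
  have : IsSimpleModule R S := isSimpleModule_iff_isAtom.mpr hS
  obtain ⟨e⟩ := nonempty_linearEquiv_residueField (R := R) S
  exact ⟨S.subtype ∘ₗ e.symm, S.injective_subtype.comp e.symm.injective⟩

theorem exists_span_singleton_residueField_ne_zero {M : Type*} [AddCommGroup M] [Module R M]
    {x : M} (hx : x ≠ 0) :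
    ∃ f : (R ∙ x) →ₗ[R] ResidueField R, f ⟨x, Submodule.mem_span_singleton_self x⟩ ≠ 0 := by
  have torsion_le : Ideal.torsionOf R M x ≤ maximalIdeal R :=
    le_maximalIdeal ((Ideal.torsionOf_eq_top_iff R x).not.mpr hx)
  let e := Ideal.quotTorsionOfEquivSpanSingleton R M x
  let π : (R ⧸ Ideal.torsionOf R M x) →ₗ[R] ResidueField R := Submodule.factor torsion_le
  have e_symm : e.symm ⟨x, Submodule.mem_span_singleton_self x⟩ = Ideal.Quotient.mk _ 1 :=
    e.symm_apply_eq.mpr (Subtype.ext (one_smul R x).symm)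
  refine ⟨π ∘ₗ e.symm, ?_⟩
  rw [LinearMap.comp_apply, LinearEquiv.coe_coe, e_symm]
  exact one_ne_zero (α := ResidueField R)

theorem subsingleton_ext_of_isFiniteLength {Y : ModuleCat.{u} R} {i : ℕ}
    (h : Subsingleton (Abelian.Ext (ModuleCat.of R (ResidueField R)) Y i))
    {M : Type u} [AddCommGroup M] [Module R M] (hM : IsFiniteLength R M) :
    Subsingleton (Abelian.Ext (ModuleCat.of R M) Y i) := by
  induction hM with
  | @of_subsingleton M =>
    have := (ModuleCat.isZero_of_subsingleton (ModuleCat.of R M)).hasProjectiveDimensionLT_zero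
    exact HasProjectiveDimensionLT.subsingleton (ModuleCat.of R M) 0 i i.zero_le Y
  | @of_simple_quotient M _ _ N _ _ ih =>
    obtain ⟨e⟩ := nonempty_linearEquiv_residueField (R := R) (M ⧸ N)
    exact subsingleton_ext_X₂ (shortExact_of_exact N.injective_subtype
      (LinearMap.exact_subtype_mkQ N) N.mkQ_surjective) ih
      (subsingleton_ext_of_iso e.symm.toModuleIso h)

theorem exists_linearMap_quotSMulTop_ne_zero {t : R} {Y : ModuleCat.{u} R}
    (ht : IsSMulRegular Y t)
    (hY : Subsingleton (Abelian.Ext (ModuleCat.of R (ResidueField R)) Y 2))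
    {ι : ResidueField R →ₗ[R] QuotSMulTop t Y} (hι : Function.Injective ι)
    {M : Type u} [AddCommGroup M] [Module R M] (hM : IsFiniteLength R M)
    (htM : t ∈ Module.annihilator R M) {x : M} (hx : x ≠ 0) :
    ∃ g : M →ₗ[R] QuotSMulTop t Y, g x ≠ 0 := by
  obtain ⟨f, hf⟩ := exists_span_singleton_residueField_ne_zero (R := R) hx
  obtain ⟨g, hg⟩ := exists_hom_factor_quotSMulTop
    (shortExact_of_exact (R ∙ x).injective_subtype (LinearMap.exact_subtype_mkQ _)
      (R ∙ x).mkQ_surjective) ht htM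
    (subsingleton_ext_of_isFiniteLength hY (hM.of_surjective (R ∙ x).mkQ_surjective))
    (ModuleCat.ofHom (ι ∘ₗ f))
  refine ⟨g.hom, fun hgx => hf (hι ?_)⟩
  rw [map_zero, ← hgx]
  exact (ConcreteCategory.congr_hom hg ⟨x, Submodule.mem_span_singleton_self x⟩).symm

theorem subsingleton_ext_residueField_of_succ {t : R} (ht : IsSMulRegular R t)
    [Nontrivial (QuotSMulTop t R)] (hlen : IsFiniteLength R (QuotSMulTop t R)) {Y : ModuleCat.{u} R}
    {i : ℕ} (hi : 2 ≤ i)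
    (h : Subsingleton (Abelian.Ext (ModuleCat.of R (ResidueField R)) Y (i + 1))) :
    Subsingleton (Abelian.Ext (ModuleCat.of R (ResidueField R)) Y i) := by
  have := (isFiniteLength_iff_isNoetherian_isArtinian.mp hlen).2
  obtain ⟨ι, hι⟩ := exists_injective_residueField (R := R) (QuotSMulTop t R)
  exact subsingleton_ext_X₁
    (shortExact_of_exact hι ι.exact_map_mkQ_range (Submodule.mkQ_surjective _))
    (subsingleton_ext_quotSMulTop_self ht Y hi)
    (subsingleton_ext_of_isFiniteLength h (hlen.of_surjective (Submodule.mkQ_surjective _)))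

end ResidueField

section Gorenstein

open IsLocalRing Pointwise

variable {R : Type u} [CommRing R] {t : R}

theorem span_singleton_eq_smul_top : Ideal.span {t} = t • (⊤ : Ideal R) := by
  rw [← Submodule.ideal_span_singleton_smul, smul_eq_mul, Ideal.mul_top]

theorem isFiniteLength_quotSMulTop_self [IsNoetherianRing R] [Ring.KrullDimLE 1 R]
    (ht : t ∈ nonZeroDivisors R) : IsFiniteLength R (QuotSMulTop t R) :=
  (Submodule.quotEquivOfEq _ _ span_singleton_eq_smul_top).isFiniteLength
    (isFiniteLength_quotient_span_singleton R ht)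

variable [IsLocalRing R] [Ring.KrullDimLE 1 R]

namespace IsGorensteinLocalRing

theorem subsingleton_ext_two (hR : IsGorensteinLocalRing R)
    (ht : t ∈ nonZeroDivisors R) (htm : t ∈ maximalIdeal R) :
    Subsingleton (Abelian.Ext (ModuleCat.of R (ResidueField R)) (ModuleCat.of R R) 2) := by
  obtain ⟨hNoeth, n, hn⟩ := hR
  have := nontrivial_quotSMulTop_of_mem_maximalIdeal R htm
  have vanishing : Subsingleton
      (Abelian.Ext (ModuleCat.of R (ResidueField R)) (ModuleCat.of R R) (n + 2)) :=
    subsingleton_abelianExt_of_subsingleton_ext (hn (n + 2) (by omega))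
  clear hn
  induction n with
  | zero => exact vanishing
  | succ n ih =>
    exact ih (subsingleton_ext_residueField_of_succ
      (Module.Flat.isSMulRegular_of_nonZeroDivisors ht)
      (isFiniteLength_quotSMulTop_self ht) (by omega) vanishing)

theorem exists_linearMap_ne_zero (hR : IsGorensteinLocalRing R)
    (ht : t ∈ nonZeroDivisors R) (htm : t ∈ maximalIdeal R) {M : Type u} [AddCommGroup M]
    [Module R M] (hM : IsFiniteLength R M) (htM : t ∈ Module.annihilator R M) {x : M}
    (hx : x ≠ 0) : ∃ g : M →ₗ[R] QuotSMulTop t R, g x ≠ 0 := by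
  have := hR.1
  have := nontrivial_quotSMulTop_of_mem_maximalIdeal R htm
  have := (isFiniteLength_iff_isNoetherian_isArtinian.mp (isFiniteLength_quotSMulTop_self ht)).2
  obtain ⟨ι, hι⟩ := exists_injective_residueField (R := R) (QuotSMulTop t R)
  exact exists_linearMap_quotSMulTop_ne_zero (Y := ModuleCat.of R R)
    (Module.Flat.isSMulRegular_of_nonZeroDivisors ht) (hR.subsingleton_ext_two ht htm) hι hM htM hx

theorem colon_colon_span_singleton (hR : IsGorensteinLocalRing R)
    (ht : t ∈ nonZeroDivisors R) {I : Ideal R} (htI : t ∈ I) :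
    (Ideal.span {t}).colon ((Ideal.span {t}).colon (I : Set R) : Set R) = I := by
  have := hR.1
  refine le_antisymm (fun j hj => ?_) fun j hj => Submodule.mem_colon.mpr fun c hc => ?_
  · by_contra hjI
    have htm : t ∈ maximalIdeal R := le_maximalIdeal (ne_of_mem_of_not_mem' trivial hjI).symm htI
    have span_le : t • (⊤ : Ideal R) ≤ I :=
      span_singleton_eq_smul_top.symm.le.trans ((Ideal.span_singleton_le_iff_mem I).mpr htI)
    obtain ⟨g, hg⟩ := hR.exists_linearMap_ne_zero ht htm
      ((isFiniteLength_quotSMulTop_self ht).of_surjective (Submodule.factor_surjective span_le))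
      ((Ideal.annihilator_quotient (I := I)).symm ▸ htI)
      ((Submodule.Quotient.mk_eq_zero I).not.mpr hjI)
    obtain ⟨c, hc⟩ := Submodule.mkQ_surjective _ (g (Submodule.Quotient.mk 1))
    have g_mk (b : R) : g (Submodule.Quotient.mk b) = 0 ↔ b * c ∈ Ideal.span {t} := by
      rw [span_singleton_eq_smul_top, ← Submodule.Quotient.mk_eq_zero, ← smul_eq_mul,
        Submodule.Quotient.mk_smul, ← Submodule.mkQ_apply _ c, hc, ← map_smul,
        ← Submodule.Quotient.mk_smul, smul_eq_mul, mul_one]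
    refine hg ((g_mk j).mpr (Submodule.mem_colon.mp hj c (Submodule.mem_colon.mpr fun b hb => ?_)))
    rw [smul_eq_mul, mul_comm]
    exact (g_mk b).mp (by rw [(Submodule.Quotient.mk_eq_zero I).mpr hb, map_zero])
  · rw [smul_eq_mul, mul_comm]
    exact Submodule.mem_colon.mp hc j hj

end IsGorensteinLocalRing

end Gorenstein

section Conductor

theorem exists_pow_mem_annihilator {R M : Type*} [CommRing R] [AddCommGroup M] [Module R M]
    [Module.Finite R M] {s : R} (h : ∀ x : M, ∃ n : ℕ, s ^ n • x = 0) :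
    ∃ n : ℕ, s ^ n ∈ Module.annihilator R M := by
  have away_trivial : Subsingleton (LocalizedModule (Submonoid.powers s) M) :=
    LocalizedModule.subsingleton_iff.mpr fun x =>
      let ⟨n, hn⟩ := h x
      ⟨s ^ n, ⟨n, rfl⟩, hn⟩
  rw [LocalizedModule.subsingleton_iff_support_subset, Module.support_eq_zeroLocus,
    ← PrimeSpectrum.zeroLocus_span {s}, PrimeSpectrum.zeroLocus_subset_zeroLocus_iff,
    Ideal.span_singleton_le_iff_mem] at away_trivial
  exact away_trivial

variable {B A : Type*} [CommRing B] [CommRing A] [Algebra B A]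

theorem mem_conductorIdeal_iff {x : B} :
    x ∈ conductorIdeal B A ↔ ∀ a : A, ∃ b : B, algebraMap B A b = algebraMap B A x * a := by
  refine Module.mem_annihilator.trans
    ((Submodule.mkQ_surjective _).forall.trans (forall_congr' fun a => ?_))
  rw [← map_smul, Submodule.mkQ_apply, Submodule.Quotient.mk_eq_zero, Algebra.smul_def]
  rfl

theorem exists_pow_mem_conductorIdeal [Module.Finite B A] {s : B}
    (hloc : ∀ a : A, ∃ (n : ℕ) (b : B), (algebraMap B A s) ^ n * a = algebraMap B A b) :
    ∃ n : ℕ, s ^ n ∈ conductorIdeal B A := by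
  refine exists_pow_mem_annihilator ((Submodule.mkQ_surjective _).forall.mpr fun a => ?_)
  obtain ⟨n, b, hb⟩ := hloc a
  refine ⟨n, ?_⟩
  rw [← map_smul, Submodule.mkQ_apply, Submodule.Quotient.mk_eq_zero, Algebra.smul_def, map_pow, hb]
  exact ⟨b, rfl⟩

variable (B A) in
/-- The natural map `A → Hom_B(𝔠, B)`, `a ↦ (x ↦ a x)`. The product `a x` is computed in `A` and
pulled back along the injection `B → A`, which is possible because `𝔠` is also an ideal of `A`. -/
def conductorHom [FaithfulSMul B A] : A →ₗ[B] conductorIdeal B A →ₗ[B] B :=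
  have inj := FaithfulSMul.algebraMap_injective B A
  let mul (a : A) (x : conductorIdeal B A) : B := (mem_conductorIdeal_iff.mp x.2 a).choose
  have hmul (a : A) (x : conductorIdeal B A) :
      algebraMap B A (mul a x) = algebraMap B A (x : B) * a :=
    (mem_conductorIdeal_iff.mp x.2 a).choose_spec
  LinearMap.mk₂ B mul
    (fun a a' x => inj (by simp only [map_add, hmul]; ring))
    (fun r a x => inj (by simp only [smul_eq_mul, map_mul, hmul, Algebra.smul_def]; ring))
    (fun a x x' => inj (by simp only [map_add, hmul, Submodule.coe_add]; ring))
    (fun r a x => inj (by simp only [smul_eq_mul, map_mul, hmul, Submodule.coe_smul]; ring))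

theorem mul_linearMap_apply_comm {I : Ideal B} (ψ : I →ₗ[B] B) (x y : I) :
    (x : B) * ψ y = y * ψ x := by
  rw [← smul_eq_mul, ← map_smul, ← smul_eq_mul, ← map_smul]
  exact congrArg ψ (Subtype.ext (mul_comm (x : B) y))

theorem colon_comap_span_singleton_le_conductorIdeal {t : B}
    (ht : algebraMap B A t ∈ nonZeroDivisors A) (htc : t ∈ conductorIdeal B A) :
    (Ideal.span {t}).colon
        ((Ideal.span {algebraMap B A t}).comap (algebraMap B A) : Set B) ≤
      conductorIdeal B A := by
  intro c hc
  refine mem_conductorIdeal_iff.mpr fun a => ?_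
  obtain ⟨b, hb⟩ := mem_conductorIdeal_iff.mp htc a
  have hbI : b ∈ (Ideal.span {algebraMap B A t}).comap (algebraMap B A) :=
    Ideal.mem_comap.mpr (Ideal.mem_span_singleton.mpr ⟨a, hb⟩)
  obtain ⟨d, hd⟩ := Ideal.mem_span_singleton.mp (Submodule.mem_colon.mp hc b hbI)
  refine ⟨d, (mul_cancel_left_mem_nonZeroDivisors ht).mp ?_⟩
  rw [← map_mul, ← hd, smul_eq_mul, map_mul, hb, mul_left_comm]

variable [FaithfulSMul B A]

@[simp]
theorem algebraMap_conductorHom (a : A) (x : conductorIdeal B A) :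
    algebraMap B A (conductorHom B A a x) = algebraMap B A (x : B) * a :=
  (mem_conductorIdeal_iff.mp x.2 a).choose_spec

theorem conductorHom_injective {t : B} (ht : algebraMap B A t ∈ nonZeroDivisors A)
    (htc : t ∈ conductorIdeal B A) : Function.Injective (conductorHom B A) := by
  intro a a' h
  refine (mul_cancel_left_mem_nonZeroDivisors ht).mp ?_
  rw [← algebraMap_conductorHom a ⟨t, htc⟩, h, algebraMap_conductorHom]

theorem mem_range_conductorHom_iff {t : B} (ht : algebraMap B A t ∈ nonZeroDivisors A)
    (htc : t ∈ conductorIdeal B A) {ψ : conductorIdeal B A →ₗ[B] B} :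
    ψ ∈ LinearMap.range (conductorHom B A) ↔ algebraMap B A t ∣ algebraMap B A (ψ ⟨t, htc⟩) := by
  constructor
  · rintro ⟨a, rfl⟩
    exact ⟨a, algebraMap_conductorHom ..⟩
  · rintro ⟨a, ha⟩
    refine ⟨a, LinearMap.ext fun x => FaithfulSMul.algebraMap_injective B A ?_⟩
    refine (mul_cancel_left_mem_nonZeroDivisors ht).mp ?_
    rw [algebraMap_conductorHom, mul_left_comm, ← ha, ← map_mul, ← map_mul,
      mul_linearMap_apply_comm ψ x ⟨t, htc⟩]

end Conductor

theorem conductor_hom_bijective_general (B A : Type*) [CommRing B] [IsLocalRing B]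
    [Ring.KrullDimLE 1 B] (hGor : IsGorensteinLocalRing B) [CommRing A] [Algebra B A]
    [FaithfulSMul B A] [Module.Finite B A] (s : B) (hregA : algebraMap B A s ∈ nonZeroDivisors A)
    (hloc : ∀ a : A, ∃ (n : ℕ) (b : B), (algebraMap B A s) ^ n * a = algebraMap B A b) :
    Function.Bijective (conductorHom B A) := by
  obtain ⟨n, htc⟩ := exists_pow_mem_conductorIdeal hloc
  have htA : algebraMap B A (s ^ n) ∈ nonZeroDivisors A :=
    map_pow (algebraMap B A) s n ▸ pow_mem hregA n
  generalize s ^ n = t at htc htA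
  have ht : t ∈ nonZeroDivisors B :=
    mem_nonZeroDivisors_of_injective (FaithfulSMul.algebraMap_injective B A) htA
  refine ⟨conductorHom_injective htA htc, fun ψ => (mem_range_conductorHom_iff htA htc).mpr ?_⟩
  let I : Ideal B := (Ideal.span {algebraMap B A t}).comap (algebraMap B A)
  suffices ψ ⟨t, htc⟩ ∈ I from Ideal.mem_span_singleton.mp this
  have htI : t ∈ I := Ideal.mem_comap.mpr (Ideal.mem_span_singleton_self _)
  rw [← hGor.colon_colon_span_singleton ht htI, Submodule.mem_colon]
  intro c hc
  have hcc := colon_comap_span_singleton_le_conductorIdeal htA htc hc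
  exact Ideal.mem_span_singleton.mpr
    ⟨ψ ⟨c, hcc⟩, (mul_comm _ _).trans (mul_linearMap_apply_comm ψ ⟨c, hcc⟩ ⟨t, htc⟩)⟩

/-- Let `B` be a one-dimensional complete local Gorenstein ring and `𝔠` the
conductor of a finite birational extension `B ⊆ A` with `A` maximal Cohen–Macaulay.  Then the
natural map `A → Hom_B(𝔠, B)`, `a ↦ (x ↦ ax)`, is an isomorphism of `B`-modules. -/
theorem conductor_hom_bijective (B A : Type*) [CommRing B] [IsLocalRing B]
    [IsNoetherianRing B] [IsAdicComplete (IsLocalRing.maximalIdeal B) B]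
    (hdim : ringKrullDim B = 1) (hGor : IsGorensteinLocalRing B)
    [CommRing A] [Algebra B A] (hinj : Function.Injective (algebraMap B A))
    [Module.Finite B A]
    (s : B) (hs : s ∈ IsLocalRing.maximalIdeal B) (hreg : s ∈ nonZeroDivisors B)
    (hregA : algebraMap B A s ∈ nonZeroDivisors A)
    (hloc : ∀ a : A, ∃ (n : ℕ) (b : B), (algebraMap B A s) ^ n * a = algebraMap B A b) :
    ∃ Φ : A →ₗ[B] (↥(conductorIdeal B A) →ₗ[B] B),
      (∀ (a : A) (x : ↥(conductorIdeal B A)),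
        algebraMap B A (Φ a x) = algebraMap B A (x : B) * a) ∧
      Function.Bijective Φ := by
  have := (faithfulSMul_iff_algebraMap_injective B A).mpr hinj
  have : Ring.KrullDimLE 1 B := Ring.krullDimLE_iff.mpr hdim.le
  exact ⟨conductorHom B A, algebraMap_conductorHom,
    conductor_hom_bijective_general B A hGor s hregA hloc⟩
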